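/- For every d > 0 there exists a constant K(d) > 1 with the following property. Let f : 𝔻 → 𝔻 be a nonconstant holomorphic map with f(0) = 0, let r ∈ (e^{−1}, 1) and let q ≥ 2 be an integer such that the hyperbolic distance in 𝔻 between r and r·e^{2πi/q} is at most d, and assume 0 ∉ f(r·𝕌_q), where 𝕌_q denotes the set of q-th roots of unity. Then every holomorphic covering map φ : 𝔻 → 𝔻 \ f(r·𝕌_q) with φ(0) = 0 satisfies ln|φ′(0)| ≤ ln(r)/K(d) < 0. -/

import Mathlib

open Complex Metric Set

noncomputable section

/-- A holomorphic covering map from the unit disc onto `U`. -/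
def IsHoloCover (φ : ℂ → ℂ) (U : Set ℂ) : Prop :=
  DifferentiableOn ℂ φ (Metric.ball 0 1) ∧
  ∃ h : Set.MapsTo φ (Metric.ball 0 1) U,
    ∀ x : U, DiscreteTopology (Set.MapsTo.restrict φ (Metric.ball 0 1) U h ⁻¹' {x}) ∧
      ∃ t : Bundle.Trivialization (Set.MapsTo.restrict φ (Metric.ball 0 1) U h ⁻¹' {x})
        (Set.MapsTo.restrict φ (Metric.ball 0 1) U h), x ∈ t.baseSet

/-- Inverse hyperbolic tangent. -/
def artanh (x : ℝ) : ℝ := (1 / 2) * Real.log ((1 + x) / (1 - x))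

/-- Hyperbolic distance on the unit disc. -/
def hypDist (z w : ℂ) : ℝ :=
  2 * artanh (‖z - w‖ / ‖1 - (starRingEnd ℂ) z * w‖)

/-- The set `r·𝕌_q ⊆ ℂ` of rescaled `q`-th roots of unity. -/
def rootsSet (r : ℝ) (q : ℕ) : Set ℂ := {w : ℂ | ∃ ζ : ℂ, ζ ^ q = 1 ∧ w = r * ζ}

/-!
Write `λ_U` for the hyperbolic density of `U = 𝔻 \ E`, where `E` is the set to be omitted, and
consider `λ_𝔻 / λ_U`, which at `φ t` is the hyperbolic distortion of the covering map `φ` at `t`.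
The disc punctured at a point of `E` contains `U` and has an explicit density, so at hyperbolic
distance at most `d` from `E` the ratio is at most some `δ < 1` depending only on `d`. By
Schwarz–Pick this bounds the ratio at `f z` for all `|z| = r`.

For `r < R < 1` let `s z = z / R`. The product of the hyperbolic distortion of `s` at `z` with
`λ_𝔻 / λ_U` at `f z` has no local maximum with value above `1`. This is Ahlfors' argument: both
metrics involved have constant curvature, so the Laplacian of the logarithm of the product would
be positive there. On `|z| = r` the product is at most `1` once `R (1 - r²) δ ≤ R² - r²`, which
holds for `R = r ^ (1 / K)` with suitable `K`; its value at `0` is `|φ'(0)| / R`.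
-/

open Filter Topology Asymptotics
open scoped ComplexConjugate

local notation "𝔻" => ball (0 : ℂ) 1

variable {f g φ : ℂ → ℂ} {a t w z : ℂ}

lemma one_sub_norm_sq_pos (hz : z ∈ 𝔻) : 0 < 1 - ‖z‖ ^ 2 := by
  have : ‖z‖ < 1 := by simpa using hz
  nlinarith [norm_nonneg z]

/-! ### Schwarz–Pick -/

/-- The Blaschke factor of the disc with zero `a`. It is an automorphism of the disc with inverse
`blaschkeFactor (-a)`, and its norm is the pseudo-hyperbolic distance from `a`. -/
def blaschkeFactor (a z : ℂ) : ℂ := (z - a) / (1 - conj a * z)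

lemma one_sub_conj_mul_ne_zero (ha : a ∈ 𝔻) (hz : z ∈ 𝔻) : 1 - conj a * z ≠ 0 := by
  rw [mem_ball_zero_iff] at ha hz
  intro h
  have hnorm : ‖a‖ * ‖z‖ = 1 := by
    simpa using congrArg norm (sub_eq_zero.mp h).symm
  nlinarith [norm_nonneg a, norm_nonneg z]

lemma norm_one_sub_conj_mul_sq (a z : ℂ) :
    ‖1 - conj a * z‖ ^ 2 = ‖z - a‖ ^ 2 + (1 - ‖a‖ ^ 2) * (1 - ‖z‖ ^ 2) := by
  simp only [← Complex.normSq_eq_norm_sq, Complex.normSq_apply, sub_re, sub_im, mul_re, mul_im,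
    one_re, one_im, conj_re, conj_im]
  ring

lemma one_sub_norm_blaschkeFactor_sq (ha : a ∈ 𝔻) (hz : z ∈ 𝔻) :
    1 - ‖blaschkeFactor a z‖ ^ 2 =
      (1 - ‖a‖ ^ 2) * (1 - ‖z‖ ^ 2) / ‖1 - conj a * z‖ ^ 2 := by
  have h : ‖1 - conj a * z‖ ≠ 0 := norm_ne_zero_iff.mpr (one_sub_conj_mul_ne_zero ha hz)
  rw [blaschkeFactor, norm_div, div_pow, eq_div_iff (pow_ne_zero 2 h), sub_mul,
    div_mul_cancel₀ _ (pow_ne_zero 2 h), norm_one_sub_conj_mul_sq]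
  ring

lemma blaschkeFactor_mem_ball (ha : a ∈ 𝔻) (hz : z ∈ 𝔻) : blaschkeFactor a z ∈ 𝔻 := by
  have h : 0 < ‖1 - conj a * z‖ := norm_pos_iff.mpr (one_sub_conj_mul_ne_zero ha hz)
  have hpos : 0 < 1 - ‖blaschkeFactor a z‖ ^ 2 := by
    rw [one_sub_norm_blaschkeFactor_sq ha hz]
    have := one_sub_norm_sq_pos ha
    have := one_sub_norm_sq_pos hz
    positivity
  rw [mem_ball_zero_iff]
  nlinarith [norm_nonneg (blaschkeFactor a z)]

@[simp]
lemma blaschkeFactor_self (a : ℂ) : blaschkeFactor a a = 0 := by simp [blaschkeFactor]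

@[simp]
lemma blaschkeFactor_neg_zero (a : ℂ) : blaschkeFactor (-a) 0 = a := by simp [blaschkeFactor]

lemma neg_mem_disc (ha : a ∈ 𝔻) : -a ∈ 𝔻 := by simpa using ha

lemma blaschkeFactor_neg_blaschkeFactor (ha : a ∈ 𝔻) (hz : z ∈ 𝔻) :
    blaschkeFactor (-a) (blaschkeFactor a z) = z := by
  have h := one_sub_conj_mul_ne_zero ha hz
  have h' := one_sub_conj_mul_ne_zero (neg_mem_disc ha) (blaschkeFactor_mem_ball ha hz)
  have hmul : blaschkeFactor a z * (1 - conj a * z) = z - a := div_mul_cancel₀ _ h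
  rw [blaschkeFactor, div_eq_iff h', map_neg]
  linear_combination hmul

lemma hasDerivAt_blaschkeFactor (ha : a ∈ 𝔻) (hz : z ∈ 𝔻) :
    HasDerivAt (blaschkeFactor a) ((1 - ‖a‖ ^ 2 : ℝ) / (1 - conj a * z) ^ 2) z := by
  have hnum : HasDerivAt (fun z : ℂ => z - a) 1 z := (hasDerivAt_id z).sub_const a
  have hden : HasDerivAt (fun z : ℂ => 1 - conj a * z) (-(conj a * 1)) z :=
    ((hasDerivAt_id z).const_mul _).const_sub 1
  refine (hnum.div hden (one_sub_conj_mul_ne_zero ha hz)).congr_deriv ?_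
  push_cast
  rw [← Complex.conj_mul']
  ring

lemma analyticAt_blaschkeFactor (ha : a ∈ 𝔻) (hz : z ∈ 𝔻) : AnalyticAt ℂ (blaschkeFactor a) z :=
  (analyticAt_id.sub analyticAt_const).div
    (analyticAt_const.sub (analyticAt_const.mul analyticAt_id)) (one_sub_conj_mul_ne_zero ha hz)

/-- The hyperbolic distortion of `f : 𝔻 → 𝔻` at `z`: the factor by which `f` scales the
hyperbolic length element `2 |dz| / (1 - |z|²)`. -/
def hypDeriv (f : ℂ → ℂ) (z : ℂ) : ℝ := ‖deriv f z‖ * (1 - ‖z‖ ^ 2) / (1 - ‖f z‖ ^ 2)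

lemma hypDeriv_nonneg (hz : z ∈ 𝔻) (hfz : f z ∈ 𝔻) : 0 ≤ hypDeriv f z :=
  div_nonneg (mul_nonneg (norm_nonneg _) (one_sub_norm_sq_pos hz).le) (one_sub_norm_sq_pos hfz).le

lemma hypDeriv_congr (h : f =ᶠ[𝓝 z] g) : hypDeriv f z = hypDeriv g z := by
  rw [hypDeriv, hypDeriv, h.deriv_eq, h.self_of_nhds]

lemma hypDeriv_comp (hf : DifferentiableAt ℂ f (g z)) (hg : DifferentiableAt ℂ g z)
    (hgz : g z ∈ 𝔻) : hypDeriv (f ∘ g) z = hypDeriv f (g z) * hypDeriv g z := by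
  have := (one_sub_norm_sq_pos hgz).ne'
  simp only [hypDeriv, deriv_comp z hf hg, norm_mul, Function.comp_apply]
  field_simp

lemma hypDeriv_blaschkeFactor (ha : a ∈ 𝔻) (hz : z ∈ 𝔻) : hypDeriv (blaschkeFactor a) z = 1 := by
  have h := one_sub_norm_sq_pos (blaschkeFactor_mem_ball ha hz)
  rw [hypDeriv, (hasDerivAt_blaschkeFactor ha hz).deriv, norm_div, norm_pow, Complex.norm_real,
    Real.norm_of_nonneg (one_sub_norm_sq_pos ha).le, div_eq_one_iff_eq h.ne',
    one_sub_norm_blaschkeFactor_sq ha hz, div_mul_eq_mul_div]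

lemma hypDeriv_blaschkeFactor_comp (ha : a ∈ 𝔻) (hf : DifferentiableAt ℂ f z) (hfz : f z ∈ 𝔻) :
    hypDeriv (blaschkeFactor a ∘ f) z = hypDeriv f z := by
  rw [hypDeriv_comp (analyticAt_blaschkeFactor ha hfz).differentiableAt hf hfz,
    hypDeriv_blaschkeFactor ha hfz, one_mul]

lemma differentiableAt_of_mem_disc (hf : DifferentiableOn ℂ f 𝔻) (hz : z ∈ 𝔻) :
    DifferentiableAt ℂ f z :=
  hf.differentiableAt (isOpen_ball.mem_nhds hz)

lemma zero_mem_disc : (0 : ℂ) ∈ 𝔻 := mem_ball_self one_pos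

lemma differentiableOn_blaschkeFactor (ha : a ∈ 𝔻) : DifferentiableOn ℂ (blaschkeFactor a) 𝔻 :=
  fun _ hz => (analyticAt_blaschkeFactor ha hz).differentiableAt.differentiableWithinAt

/-- `f` with source and target recentred by disc automorphisms so that `a` and `f a` become `0`. -/
def recenter (f : ℂ → ℂ) (a : ℂ) : ℂ → ℂ := blaschkeFactor (f a) ∘ f ∘ blaschkeFactor (-a)

lemma recenter_zero (f : ℂ → ℂ) (a : ℂ) : recenter f a 0 = 0 := by simp [recenter]

lemma mapsTo_recenter (hmaps : MapsTo f 𝔻 𝔻) (ha : a ∈ 𝔻) : MapsTo (recenter f a) 𝔻 𝔻 :=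
  fun _ hz => blaschkeFactor_mem_ball (hmaps ha)
    (hmaps (blaschkeFactor_mem_ball (neg_mem_disc ha) hz))

lemma differentiableOn_recenter (hf : DifferentiableOn ℂ f 𝔻) (hmaps : MapsTo f 𝔻 𝔻)
    (ha : a ∈ 𝔻) : DifferentiableOn ℂ (recenter f a) 𝔻 :=
  have hmaps_neg : MapsTo (blaschkeFactor (-a)) 𝔻 𝔻 :=
    fun _ => blaschkeFactor_mem_ball (neg_mem_disc ha)
  (differentiableOn_blaschkeFactor (hmaps ha)).comp
    (hf.comp (differentiableOn_blaschkeFactor (neg_mem_disc ha)) hmaps_neg) (hmaps.comp hmaps_neg)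

lemma norm_blaschkeFactor_map_le (hf : DifferentiableOn ℂ f 𝔻) (hmaps : MapsTo f 𝔻 𝔻)
    (ha : a ∈ 𝔻) (hz : z ∈ 𝔻) : ‖blaschkeFactor (f a) (f z)‖ ≤ ‖blaschkeFactor a z‖ := by
  have schwarz := Complex.norm_le_norm_of_mapsTo_ball (differentiableOn_recenter hf hmaps ha)
    ((mapsTo_recenter hmaps ha).mono_right ball_subset_closedBall) (recenter_zero f a)
    (mem_ball_zero_iff.mp (blaschkeFactor_mem_ball ha hz))
  simpa [recenter, blaschkeFactor_neg_blaschkeFactor ha hz] using schwarz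

lemma hypDeriv_recenter_zero (hf : DifferentiableOn ℂ f 𝔻) (hmaps : MapsTo f 𝔻 𝔻) (ha : a ∈ 𝔻) :
    hypDeriv (recenter f a) 0 = hypDeriv f a := by
  have hb : DifferentiableAt ℂ (blaschkeFactor (-a)) 0 :=
    differentiableAt_of_mem_disc (differentiableOn_blaschkeFactor (neg_mem_disc ha)) zero_mem_disc
  have hfa : DifferentiableAt ℂ f (blaschkeFactor (-a) 0) := by
    simpa using differentiableAt_of_mem_disc hf ha
  rw [recenter, hypDeriv_blaschkeFactor_comp (hmaps ha) (hfa.comp 0 hb) (by simpa using hmaps ha),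
    hypDeriv_comp hfa hb (by simpa using ha),
    hypDeriv_blaschkeFactor (neg_mem_disc ha) zero_mem_disc, blaschkeFactor_neg_zero, mul_one]

theorem hypDeriv_le_one (hf : DifferentiableOn ℂ f 𝔻) (hmaps : MapsTo f 𝔻 𝔻) (ha : a ∈ 𝔻) :
    hypDeriv f a ≤ 1 := by
  have schwarz := Complex.norm_deriv_le_one_of_mapsTo_ball
    (differentiableOn_recenter hf hmaps ha) (c := 0)
    (by simpa [recenter_zero] using (mapsTo_recenter hmaps ha).mono_right ball_subset_closedBall)
    one_pos
  rw [← hypDeriv_recenter_zero hf hmaps ha]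
  simpa [hypDeriv, recenter_zero] using schwarz

/-! ### Maps omitting a value -/

lemma norm_deriv_mul_le_neg_two_mul_re {L : ℂ → ℂ} (hL : DifferentiableOn ℂ L 𝔻)
    (hre : ∀ z ∈ 𝔻, (L z).re < 0) (ht : t ∈ 𝔻) :
    ‖deriv L t‖ * (1 - ‖t‖ ^ 2) ≤ -2 * (L t).re := by
  -- The Cayley transform `w ↦ (w - L t) / (w + conj (L t))` maps the left half-plane to the disc.
  set q : ℂ → ℂ := fun z => (L z - L t) / (L z + conj (L t)) with hq
  have hden (z : ℂ) (hz : z ∈ 𝔻) : L z + conj (L t) ≠ 0 := fun h => by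
    have := congrArg Complex.re h
    simp only [add_re, conj_re, zero_re] at this
    linarith [hre z hz, hre t ht]
  have hqmaps : MapsTo q 𝔻 𝔻 := fun z hz => by
    have hsq : ‖L z + conj (L t)‖ ^ 2 - ‖L z - L t‖ ^ 2 = 4 * ((L z).re * (L t).re) := by
      simp only [← Complex.normSq_eq_norm_sq, Complex.normSq_apply, sub_re, sub_im, add_re, add_im,
        conj_re, conj_im]
      ring
    rw [mem_ball_zero_iff, hq, norm_div, div_lt_one (norm_pos_iff.mpr (hden z hz))]
    refine lt_of_pow_lt_pow_left₀ 2 (norm_nonneg _) ?_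
    linarith [mul_pos_of_neg_of_neg (hre z hz) (hre t ht)]
  have hqd : DifferentiableOn ℂ q 𝔻 := (hL.sub_const _).div (hL.add_const _) hden
  have hderiv : HasDerivAt q (deriv L t / ((2 * (L t).re : ℝ) : ℂ)) t := by
    have hLt := (differentiableAt_of_mem_disc hL ht).hasDerivAt
    refine ((hLt.sub_const _).div (hLt.add_const _) (hden t ht)).congr_deriv ?_
    rw [← Complex.add_conj]
    field_simp [hden t ht]
    ring
  have hpick := hypDeriv_le_one hqd hqmaps ht
  have hneg := hre t ht
  rw [hypDeriv, hderiv.deriv, hq, norm_div, Complex.norm_real,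
    Real.norm_of_nonpos (by linarith)] at hpick
  simpa [div_mul_eq_mul_div, div_le_one (show 0 < -(2 * (L t).re) by linarith)] using hpick

section Lifting

variable {𝕜 : Type*} [NontriviallyNormedField 𝕜] [CompleteSpace 𝕜]

lemma hasDerivAt_of_comp_eventuallyEq {p ψ k : 𝕜 → 𝕜} {p' ψ' x : 𝕜}
    (hp : HasStrictDerivAt p p' (k x)) (hp' : p' ≠ 0) (hψ : HasDerivAt ψ ψ' x)
    (hk : ContinuousAt k x) (hcomp : ∀ᶠ y in 𝓝 x, p (k y) = ψ y) :
    HasDerivAt k (p'⁻¹ * ψ') x := by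
  have hinv : HasDerivAt (hp.localInverse p _ _ hp') p'⁻¹ (ψ x) := by
    rw [← hcomp.self_of_nhds]
    exact (hp.to_localInverse hp').hasDerivAt
  refine (hinv.comp x hψ).congr_of_eventuallyEq ?_
  filter_upwards [hk.eventually (hp.hasStrictFDerivAt_equiv hp').eventually_left_inverse, hcomp]
    with y hy hcy
  rw [Function.comp_apply, ← hcy]
  exact hy.symm

end Lifting

instance : ContractibleSpace 𝔻 := (convex_ball (0 : ℂ) 1).contractibleSpace ⟨0, zero_mem_disc⟩

instance : LocallyPathConnectedSpace 𝔻 := isOpen_ball.locallyPathConnectedSpace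

lemma exists_log (hf : DifferentiableOn ℂ f 𝔻) (hne : ∀ z ∈ 𝔻, f z ≠ 0) :
    ∃ L : ℂ → ℂ, DifferentiableOn ℂ L 𝔻 ∧ ∀ z ∈ 𝔻, Complex.exp (L z) = f z := by
  obtain ⟨L, hLc, hexp⟩ := Complex.exists_continuousOn_eqOn_exp_comp
    (SimplyConnectedSpace.ofContractible 𝔻) isOpen_ball hf.continuousOn
    (by rintro ⟨z, hz, h⟩; exact hne z hz h)
  refine ⟨L, fun z hz => ?_, hexp⟩
  have hmem := isOpen_ball.mem_nhds hz
  exact (hasDerivAt_of_comp_eventuallyEq (Complex.hasStrictDerivAt_exp (L z))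
    (Complex.exp_ne_zero _) (differentiableAt_of_mem_disc hf hz).hasDerivAt
    (hLc.continuousAt hmem)
    (by filter_upwards [hmem] using hexp)).differentiableAt.differentiableWithinAt

/-- The ratio at distance `s` from the puncture of the hyperbolic density of the disc to that of
the punctured disc; it extends continuously by `0` to `s = 0` since `negMulLog 0 = 0`. -/
def puncturedDiscRatio (s : ℝ) : ℝ := 2 * Real.negMulLog s / (1 - s ^ 2)

lemma hypDeriv_le_puncturedDiscRatio (hf : DifferentiableOn ℂ f 𝔻) (hmaps : MapsTo f 𝔻 𝔻)
    (hne : ∀ z ∈ 𝔻, f z ≠ 0) (ht : t ∈ 𝔻) : hypDeriv f t ≤ puncturedDiscRatio ‖f t‖ := by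
  obtain ⟨L, hL, hexp⟩ := exists_log hf hne
  have hnorm (z : ℂ) (hz : z ∈ 𝔻) : ‖f z‖ = Real.exp (L z).re := by
    rw [← hexp z hz, Complex.norm_exp]
  have hre (z : ℂ) (hz : z ∈ 𝔻) : (L z).re < 0 := by
    have := hmaps hz
    rwa [mem_ball_zero_iff, hnorm z hz, Real.exp_lt_one_iff] at this
  have hderiv : deriv f t = f t * deriv L t := by
    have hLt := (differentiableAt_of_mem_disc hL ht).hasDerivAt.cexp
    have heq : f =ᶠ[𝓝 t] fun z => Complex.exp (L z) := by
      filter_upwards [isOpen_ball.mem_nhds ht] with z hz using (hexp z hz).symm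
    rw [heq.deriv_eq, hLt.deriv, hexp t ht]
  have hbound := mul_le_mul_of_nonneg_left (norm_deriv_mul_le_neg_two_mul_re hL hre ht)
    (norm_nonneg (f t))
  have hlog : Real.log ‖f t‖ = (L t).re := by rw [hnorm t ht, Real.log_exp]
  rw [hypDeriv, puncturedDiscRatio, div_le_div_iff_of_pos_right (one_sub_norm_sq_pos (hmaps ht)),
    hderiv, norm_mul, Real.negMulLog, hlog]
  linarith

theorem hypDeriv_le_puncturedDiscRatio_of_forall_ne (hf : DifferentiableOn ℂ f 𝔻)
    (hmaps : MapsTo f 𝔻 𝔻) (ha : a ∈ 𝔻) (hne : ∀ z ∈ 𝔻, f z ≠ a) (ht : t ∈ 𝔻) :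
    hypDeriv f t ≤ puncturedDiscRatio ‖blaschkeFactor a (f t)‖ := by
  rw [← hypDeriv_blaschkeFactor_comp ha (differentiableAt_of_mem_disc hf ht) (hmaps ht)]
  refine hypDeriv_le_puncturedDiscRatio ((differentiableOn_blaschkeFactor ha).comp hf hmaps)
    (fun z hz => blaschkeFactor_mem_ball ha (hmaps hz)) (fun z hz => ?_) ht
  exact div_ne_zero (sub_ne_zero.mpr (hne z hz)) (one_sub_conj_mul_ne_zero ha (hmaps hz))

lemma puncturedDiscRatio_nonneg {s : ℝ} (hs₀ : 0 ≤ s) (hs₁ : s < 1) : 0 ≤ puncturedDiscRatio s :=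
  div_nonneg (mul_nonneg zero_le_two (Real.negMulLog_nonneg hs₀ hs₁.le)) (by nlinarith)

lemma puncturedDiscRatio_lt_one {s : ℝ} (hs₀ : 0 ≤ s) (hs₁ : s < 1) : puncturedDiscRatio s < 1 := by
  rcases hs₀.eq_or_lt with rfl | hs
  · simp [puncturedDiscRatio]
  -- `x < sinh x` at `x = -log s`
  · have hsinh := Real.self_lt_sinh_iff.mpr (neg_pos.mpr (Real.log_neg hs hs₁))
    rw [Real.sinh_eq, neg_neg, Real.exp_neg, Real.exp_log hs] at hsinh
    have hmul : s * -Real.log s < (1 - s ^ 2) / 2 := by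
      calc s * -Real.log s < s * ((s⁻¹ - s) / 2) := mul_lt_mul_of_pos_left hsinh hs
        _ = (1 - s ^ 2) / 2 := by field_simp
    rw [puncturedDiscRatio, div_lt_one (by nlinarith), Real.negMulLog]
    linarith

lemma continuousOn_puncturedDiscRatio : ContinuousOn puncturedDiscRatio (Ico 0 1) :=
  (Real.continuous_negMulLog.const_mul 2).continuousOn.div (by fun_prop) fun s hs => by
    have := hs.1
    have := hs.2
    nlinarith

lemma exists_puncturedDiscRatio_le {s₀ : ℝ} (hs₀ : 0 ≤ s₀) (hs₁ : s₀ < 1) :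
    ∃ δ, 0 ≤ δ ∧ δ < 1 ∧ ∀ s ∈ Icc 0 s₀, puncturedDiscRatio s ≤ δ := by
  obtain ⟨x, hx, hmax⟩ := isCompact_Icc.exists_isMaxOn (nonempty_Icc.mpr hs₀)
    (continuousOn_puncturedDiscRatio.mono (Icc_subset_Ico_right hs₁))
  have hx₁ := hx.2.trans_lt hs₁
  exact ⟨puncturedDiscRatio x, puncturedDiscRatio_nonneg hx.1 hx₁,
    puncturedDiscRatio_lt_one hx.1 hx₁, fun s hs => hmax hs⟩

/-! ### Curvature through second-order expansions -/

/-- To second order at `z₀`, `u` is `log ‖g‖ + c ‖z - z₀‖²` with `g` holomorphic and nonvanishing.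
For `u` of class `C²` this says that the Laplacian of `u` at `z₀` is `4 c`. -/
def HasLogNormExpansion (u : ℂ → ℝ) (c : ℝ) (z₀ : ℂ) : Prop :=
  ∃ g : ℂ → ℂ, AnalyticAt ℂ g z₀ ∧ g z₀ ≠ 0 ∧
    (fun z => u z - Real.log ‖g z‖ - c * ‖z - z₀‖ ^ 2) =o[𝓝 z₀] fun z => ‖z - z₀‖ ^ 2

namespace HasLogNormExpansion

variable {u v : ℂ → ℝ} {b c : ℝ} {z₀ : ℂ}

lemma log_norm (hg : AnalyticAt ℂ g z₀) (hne : g z₀ ≠ 0) :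
    HasLogNormExpansion (fun z => Real.log ‖g z‖) 0 z₀ :=
  ⟨g, hg, hne, by simp⟩

lemma congr (hu : HasLogNormExpansion u c z₀) (h : v =ᶠ[𝓝 z₀] u) :
    HasLogNormExpansion v c z₀ := by
  obtain ⟨g, hg, hne, ho⟩ := hu
  refine ⟨g, hg, hne, ho.congr' ?_ .rfl⟩
  filter_upwards [h] with z hz
  rw [hz]

lemma add (hu : HasLogNormExpansion u b z₀) (hv : HasLogNormExpansion v c z₀) :
    HasLogNormExpansion (u + v) (b + c) z₀ := by
  obtain ⟨g, hg, hgne, hgo⟩ := hu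
  obtain ⟨h, hh, hhne, hho⟩ := hv
  refine ⟨g * h, hg.mul hh, mul_ne_zero hgne hhne, (hgo.add hho).congr' ?_ .rfl⟩
  filter_upwards [hg.continuousAt.eventually_ne hgne, hh.continuousAt.eventually_ne hhne]
    with z hgz hhz
  rw [Pi.add_apply, Pi.mul_apply, norm_mul,
    Real.log_mul (norm_ne_zero_iff.mpr hgz) (norm_ne_zero_iff.mpr hhz)]
  ring

lemma neg (hu : HasLogNormExpansion u c z₀) : HasLogNormExpansion (-u) (-c) z₀ := by
  obtain ⟨g, hg, hne, ho⟩ := hu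
  refine ⟨g⁻¹, hg.inv hne, inv_ne_zero hne, ho.neg_left.congr_left fun z => ?_⟩
  rw [Pi.neg_apply, Pi.inv_apply, norm_inv, Real.log_inv]
  ring

lemma sub (hu : HasLogNormExpansion u b z₀) (hv : HasLogNormExpansion v c z₀) :
    HasLogNormExpansion (u - v) (b - c) z₀ := by
  simpa only [sub_eq_add_neg] using hu.add hv.neg

theorem not_isLocalMax (hu : HasLogNormExpansion u c z₀) (hc : 0 < c) : ¬ IsLocalMax u z₀ := by
  obtain ⟨g, hg, hne, ho⟩ := hu
  intro hmax
  have heq : u z₀ = Real.log ‖g z₀‖ := by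
    have := (ho.bound one_pos).self_of_nhds
    simpa [sub_eq_zero] using this
  have hlt : ∀ᶠ z in 𝓝 z₀, Real.log ‖g z‖ + c / 2 * ‖z - z₀‖ ^ 2 ≤ Real.log ‖g z₀‖ := by
    filter_upwards [hmax, ho.bound (half_pos hc)] with z hz hoz
    rw [Real.norm_eq_abs, Real.norm_of_nonneg (by positivity), abs_le] at hoz
    linarith [hoz.1]
  have hne_ev := hg.continuousAt.eventually_ne hne
  have hgmax : IsLocalMax (norm ∘ g) z₀ := by
    filter_upwards [hlt, hne_ev] with z hz hgz
    refine (Real.log_le_log_iff (norm_pos_iff.mpr hgz) (norm_pos_iff.mpr hne)).mp ?_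
    nlinarith [sq_nonneg ‖z - z₀‖]
  have hconst := Complex.eventually_eq_of_isLocalMax_norm
    (hg.eventually_analyticAt.mono fun _ h => h.differentiableAt) hgmax
  obtain ⟨z, hzne, hz, hgz⟩ : ∃ z, z ≠ z₀ ∧ _ ∧ g z = g z₀ :=
    ((eventually_mem_nhdsWithin (a := z₀) (s := {z₀}ᶜ)).and
      ((hlt.and hconst).filter_mono nhdsWithin_le_nhds)).exists
  rw [hgz] at hz
  have : 0 < ‖z - z₀‖ ^ 2 := pow_pos (norm_pos_iff.mpr (sub_ne_zero.mpr hzne)) 2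
  nlinarith

lemma log_one_sub_norm_sq_of_eq_zero {k : ℂ → ℂ} {k' : ℂ} (hk : HasDerivAt k k' z₀)
    (h₀ : k z₀ = 0) :
    HasLogNormExpansion (fun z => Real.log (1 - ‖k z‖ ^ 2)) (-‖k'‖ ^ 2) z₀ := by
  refine ⟨1, analyticAt_const, one_ne_zero, ?_⟩
  have hkO : (fun z => ‖k z‖) =O[𝓝 z₀] fun z => ‖z - z₀‖ := by
    simpa [h₀] using hk.isBigO_sub.norm_norm
  have hlog : (fun x : ℝ => Real.log (1 - x) + x) =o[𝓝 0] fun x => x := by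
    have hd : HasDerivAt (fun x : ℝ => Real.log (1 - x)) (-1) 0 := by
      simpa using ((hasDerivAt_id (0 : ℝ)).const_sub 1).log (by simp)
    simpa using hd.isLittleO
  have hk₀ : Tendsto (fun z => ‖k z‖ ^ 2) (𝓝 z₀) (𝓝 0) := by
    simpa [h₀, Pi.pow_def] using (hk.continuousAt.norm.pow 2).tendsto
  have hlogk : (fun z => Real.log (1 - ‖k z‖ ^ 2) + ‖k z‖ ^ 2) =o[𝓝 z₀]
      fun z => ‖z - z₀‖ ^ 2 := (hlog.comp_tendsto hk₀).trans_isBigO (hkO.pow 2)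
  have hsq : (fun z => ‖k z‖ ^ 2 - ‖k'‖ ^ 2 * ‖z - z₀‖ ^ 2) =o[𝓝 z₀]
      fun z => ‖z - z₀‖ ^ 2 := by
    have hdiff : (fun z => ‖k z‖ - ‖(z - z₀) * k'‖) =o[𝓝 z₀] fun z => ‖z - z₀‖ := by
      have hlin : (fun z => k z - (z - z₀) * k') =o[𝓝 z₀] fun z => z - z₀ := by
        simpa [h₀] using hk.isLittleO
      exact (IsBigO.of_norm_le fun z => abs_norm_sub_norm_le _ _).trans_isLittleO
        hlin.norm_norm
    have hsum : (fun z => ‖k z‖ + ‖(z - z₀) * k'‖) =O[𝓝 z₀] fun z => ‖z - z₀‖ :=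
      hkO.add (IsBigO.of_bound ‖k'‖ (.of_forall fun z => by simp [mul_comm]))
    refine (hdiff.mul_isBigO hsum).congr (fun z => ?_) fun z => (sq _).symm
    rw [norm_mul]
    ring
  refine (hlogk.sub hsq).congr_left fun z => ?_
  simp only [Pi.one_apply, norm_one, Real.log_one]
  ring

theorem log_one_sub_norm_sq {k : ℂ → ℂ} (hk : AnalyticAt ℂ k z₀) (hkz₀ : k z₀ ∈ 𝔻) :
    HasLogNormExpansion (fun z => Real.log (1 - ‖k z‖ ^ 2))
      (-(‖deriv k z₀‖ / (1 - ‖k z₀‖ ^ 2)) ^ 2) z₀ := by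
  set a := k z₀
  have hpos := one_sub_norm_sq_pos hkz₀
  have hself : 1 - conj a * a = ((1 - ‖a‖ ^ 2 : ℝ) : ℂ) := by
    rw [Complex.conj_mul']
    push_cast
    rfl
  have hderiv : HasDerivAt (blaschkeFactor a ∘ k)
      ((1 - ‖a‖ ^ 2 : ℝ) / (1 - conj a * a) ^ 2 * deriv k z₀) z₀ :=
    (hasDerivAt_blaschkeFactor hkz₀ hkz₀).comp z₀ hk.differentiableAt.hasDerivAt
  have hvanish := log_one_sub_norm_sq_of_eq_zero hderiv (blaschkeFactor_self a)
  have hlog := log_norm (g := fun z => (1 - conj a * k z) ^ 2 / ((1 - ‖a‖ ^ 2 : ℝ) : ℂ))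
    (((analyticAt_const.sub (analyticAt_const.mul hk)).pow 2).div_const)
    (div_ne_zero (pow_ne_zero 2 (one_sub_conj_mul_ne_zero hkz₀ hkz₀))
      (Complex.ofReal_ne_zero.mpr hpos.ne'))
  convert (hvanish.add hlog).congr ?_ using 1
  · rw [add_zero, hself, norm_mul, norm_div, norm_pow, Complex.norm_real,
      Real.norm_of_nonneg hpos.le]
    field_simp
  · filter_upwards [hk.continuousAt (isOpen_ball.mem_nhds hkz₀)] with z hz
    have hden := norm_ne_zero_iff.mpr (one_sub_conj_mul_ne_zero hkz₀ hz)
    have hkz := one_sub_norm_sq_pos hz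
    rw [Pi.add_apply, Function.comp_apply, one_sub_norm_blaschkeFactor_sq hkz₀ hz, norm_div,
      norm_pow, Complex.norm_real, Real.norm_of_nonneg hpos.le,
      ← Real.log_mul (by positivity) (by positivity)]
    congr 1
    field_simp

end HasLogNormExpansion

lemma comparison_quadratic_pos {c p n : ℝ} (hp : 0 < p) (hp₁ : p ≤ 1) (hn : 0 ≤ n)
    (hpn : p * n ≤ 1) (hcp : 1 < c * p) : 0 < c ^ 2 - 1 ^ 2 + ((p * n) ^ 2 - n ^ 2) := by
  have hcp' : 1 < (c * p) ^ 2 := one_lt_pow₀ hcp two_ne_zero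
  have hprod : 0 ≤ (1 - p ^ 2) * (1 - (p * n) ^ 2) :=
    mul_nonneg (sub_nonneg.mpr (pow_le_one₀ hp.le hp₁))
      (sub_nonneg.mpr (pow_le_one₀ (by positivity) hpn))
  refine pos_of_mul_pos_right (a := p ^ 2) ?_ (sq_nonneg p)
  linarith

lemma continuousAt_hypDeriv (hf : AnalyticAt ℂ f z) (hfz : f z ∈ 𝔻) :
    ContinuousAt (hypDeriv f) z :=
  (hf.deriv.continuousAt.norm.mul (by fun_prop)).div
    (continuousAt_const.sub (hf.continuousAt.norm.pow 2)) (one_sub_norm_sq_pos hfz).ne'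

theorem HasLogNormExpansion.log_hypDeriv_comp (hφ : AnalyticAt ℂ φ (g z)) (hg : AnalyticAt ℂ g z)
    (hz : z ∈ 𝔻) (hgz : g z ∈ 𝔻) (hφgz : φ (g z) ∈ 𝔻) (hne : deriv φ (g z) ≠ 0) :
    HasLogNormExpansion (fun x => Real.log (hypDeriv φ (g x)))
      ((hypDeriv (φ ∘ g) z ^ 2 - hypDeriv g z ^ 2) / (1 - ‖z‖ ^ 2) ^ 2) z := by
  have hφg : AnalyticAt ℂ (φ ∘ g) z := hφ.comp hg
  have hlog := ((log_norm (hφ.deriv.comp hg) hne).add (log_one_sub_norm_sq hg hgz)).sub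
    (log_one_sub_norm_sq hφg hφgz)
  convert hlog.congr ?_ using 1
  · have := (one_sub_norm_sq_pos hz).ne'
    simp only [hypDeriv, Function.comp_apply]
    field_simp
    ring
  · filter_upwards [hg.continuousAt (isOpen_ball.mem_nhds hgz),
      hφg.continuousAt (isOpen_ball.mem_nhds hφgz),
      (hφ.deriv.comp hg).continuousAt.eventually_ne hne] with x hgx hφgx hnex
    have hnum := one_sub_norm_sq_pos hgx
    have hden := one_sub_norm_sq_pos hφgx
    have hnorm : ‖deriv φ (g x)‖ ≠ 0 := norm_ne_zero_iff.mpr hnex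
    rw [Function.comp_apply] at hden
    simp only [Pi.add_apply, Pi.sub_apply, Function.comp_apply]
    rw [hypDeriv, Real.log_div (by positivity) hden.ne', Real.log_mul hnorm hnum.ne']

theorem not_isLocalMax_hypDeriv_mul_hypDeriv_comp {s : ℂ → ℂ} (hs : AnalyticAt ℂ s z)
    (hφ : AnalyticAt ℂ φ (g z)) (hg : AnalyticAt ℂ g z) (hz : z ∈ 𝔻) (hsz : s z ∈ 𝔻)
    (hgz : g z ∈ 𝔻) (hφgz : φ (g z) ∈ 𝔻) (hφ_le : hypDeriv φ (g z) ≤ 1)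
    (hφg_le : hypDeriv (φ ∘ g) z ≤ 1) (hgt : 1 < hypDeriv s z * hypDeriv φ (g z)) :
    ¬ IsLocalMax (fun x => hypDeriv s x * hypDeriv φ (g x)) z := by
  have hs_pos : 0 < hypDeriv s z := (hypDeriv_nonneg hz hsz).lt_of_ne' fun h => by
    norm_num [h] at hgt
  have hφ_pos : 0 < hypDeriv φ (g z) := (hypDeriv_nonneg hgz hφgz).lt_of_ne' fun h => by
    norm_num [h] at hgt
  have hs_ne : deriv s z ≠ 0 := fun h => by simp [hypDeriv, h] at hs_pos
  have hφ_ne : deriv φ (g z) ≠ 0 := fun h => by simp [hypDeriv, h] at hφ_pos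
  have hexp := (HasLogNormExpansion.log_hypDeriv_comp (g := id) hs analyticAt_id hz hz hsz
    hs_ne).add (.log_hypDeriv_comp hφ hg hz hgz hφgz hφ_ne)
  have hid : hypDeriv id z = 1 := by
    simp [hypDeriv, div_self (one_sub_norm_sq_pos hz).ne']
  rw [Function.comp_id, hid, ← add_div] at hexp
  intro hmax
  refine hexp.not_isLocalMax (div_pos ?_ (pow_pos (one_sub_norm_sq_pos hz) 2)) ?_
  · rw [hypDeriv_comp hφ.differentiableAt hg.differentiableAt hgz] at hφg_le ⊢
    exact comparison_quadratic_pos hφ_pos hφ_le (hypDeriv_nonneg hz hgz) hφg_le hgt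
  · have hsx := (continuousAt_hypDeriv hs hsz).eventually (lt_mem_nhds hs_pos)
    have hφx := ((continuousAt_hypDeriv hφ hφgz).comp hg.continuousAt).eventually
      (lt_mem_nhds hφ_pos)
    filter_upwards [hmax, hsx, hφx] with x hx hsx hφx
    rw [Function.comp_apply] at hφx
    simp only [Pi.add_apply, id]
    rw [← Real.log_mul hsx.ne' hφx.ne', ← Real.log_mul hs_pos.ne' hφ_pos.ne']
    exact Real.log_le_log (by positivity) hx

/-! ### Local sections and lifts of covering maps -/

lemma eventually_deriv_ne_zero (hf : AnalyticAt ℂ f z) (hconst : ¬ ∀ᶠ x in 𝓝 z, f x = f z) :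
    ∀ᶠ x in 𝓝[≠] z, deriv f x ≠ 0 := by
  refine hf.deriv.eventually_eq_zero_or_eventually_ne_zero.resolve_left fun h => hconst ?_
  have horder : analyticOrderAt (f · - f z) z = ⊤ := by
    rw [← hf.analyticOrderAt_deriv_add_one, analyticOrderAt_eq_top.mpr h, top_add]
  exact (analyticOrderAt_eq_top.mp horder).mono fun _ => sub_eq_zero.mp

lemma deriv_ne_zero_of_eventually_rightInverse (hf : AnalyticAt ℂ f z) (hgz : g (f z) = z)
    (hg : ∀ᶠ w in 𝓝 (f z), ContinuousAt g w ∧ f (g w) = w) : deriv f z ≠ 0 := by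
  have hgc : ContinuousAt g (f z) := hg.self_of_nhds.1
  have hgt : Tendsto g (𝓝 (f z)) (𝓝 z) := by simpa [ContinuousAt, hgz] using hgc
  have hconst : ¬ ∀ᶠ x in 𝓝 z, f x = f z := fun h => by
    have hpoint : ∀ᶠ w in 𝓝 (f z), w = f z := by
      filter_upwards [hg, hgt.eventually h] with w hw hgw
      rw [← hw.2, hgw]
    obtain ⟨w, hw, hwne⟩ := ((hpoint.filter_mono nhdsWithin_le_nhds).and
      (eventually_mem_nhdsWithin (a := f z) (s := {f z}ᶜ))).exists
    exact hwne hw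
  -- `g` is holomorphic away from `f z` by the inverse function rule, hence also at `f z`.
  have hgd : ∀ᶠ w in 𝓝[≠] (f z), DifferentiableAt ℂ g w := by
    have hev := eventually_nhdsWithin_iff.mp (eventually_deriv_ne_zero hf hconst)
    filter_upwards [hg.eventually_nhds.filter_mono nhdsWithin_le_nhds, self_mem_nhdsWithin,
      (hgt.eventually (hev.and hf.eventually_analyticAt)).filter_mono nhdsWithin_le_nhds]
      with w hw hwne ⟨hderiv, hfa⟩
    have hgw := hw.self_of_nhds
    have hne : g w ≠ z := fun h => hwne (by rw [← hgw.2, h]; rfl)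
    exact (HasDerivAt.of_local_left_inverse hgw.1 hfa.differentiableAt.hasDerivAt (hderiv hne)
      (hw.mono fun _ => And.right)).differentiableAt
  have hga : DifferentiableAt ℂ g (f z) :=
    (analyticAt_of_differentiable_on_punctured_nhds_of_continuousAt hgd hgc).differentiableAt
  have hcomp : HasDerivAt (f ∘ g) (deriv f z * deriv g (f z)) (f z) :=
    HasDerivAt.comp (f z) (by rw [hgz]; exact hf.differentiableAt.hasDerivAt) hga.hasDerivAt
  have hid : HasDerivAt (f ∘ g) 1 (f z) :=
    (hasDerivAt_id (f z)).congr_of_eventuallyEq (hg.mono fun _ => And.right)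
  exact left_ne_zero_of_mul_eq_one (hcomp.unique hid)

lemma exists_analyticAt_rightInverse (hf : AnalyticAt ℂ f z) (hne : deriv f z ≠ 0) :
    ∃ g : ℂ → ℂ, AnalyticAt ℂ g (f z) ∧ g (f z) = z ∧ ∀ᶠ w in 𝓝 (f z), f (g w) = w :=
  have hinv := hf.hasStrictDerivAt.hasStrictFDerivAt_equiv hne
  ⟨_, hf.analyticAt_localInverse hne, hinv.localInverse_apply_image, hinv.eventually_right_inverse⟩

lemma eventually_notMem_range_of_isCoveringMapOn {E X : Type*} [TopologicalSpace E]
    [TopologicalSpace X] {p : E → X} {s : Set X} (hp : IsCoveringMapOn p s) {x : X} (hx : x ∈ s)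
    (hxr : x ∉ range p) : ∀ᶠ y in 𝓝 x, y ∉ range p := by
  obtain ⟨-, V, hxV, hVo, -, H, -⟩ := hp x hx
  filter_upwards [hVo.mem_nhds hxV] with y hyV
  rintro ⟨e, rfl⟩
  obtain ⟨e', he'⟩ := (H ⟨e, hyV⟩).2
  exact hxr ⟨e', he'⟩

namespace IsHoloCover

variable {U : Set ℂ} (hφ : IsHoloCover φ U)
include hφ

lemma differentiableAt (ht : t ∈ 𝔻) : DifferentiableAt ℂ φ t :=
  differentiableAt_of_mem_disc hφ.1 ht

lemma analyticAt (ht : t ∈ 𝔻) : AnalyticAt ℂ φ t :=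
  hφ.1.analyticAt (isOpen_ball.mem_nhds ht)

lemma mapsTo : MapsTo φ 𝔻 U := hφ.2.1

lemma isCoveringMapOn (hU : IsOpen U) : IsCoveringMapOn (fun x : 𝔻 => φ x) U := by
  obtain ⟨-, hmaps, htriv⟩ := hφ
  refine IsCoveringMapOn.of_isCoveringMap_subtype hU (fun x => hmaps x.2) fun x => ?_
  obtain ⟨hdiscrete, e, hx⟩ := htriv x
  exact @IsEvenlyCovered.of_trivialization _ _ _ _ _ _ _ hdiscrete x e hx

lemma deriv_ne_zero (hU : IsOpen U) (ht : t ∈ 𝔻) : deriv φ t ≠ 0 := by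
  obtain ⟨e, he, hpe⟩ := (hφ.isCoveringMapOn hU).isLocalHomeomorphOn ⟨t, ht⟩ (hφ.mapsTo ht)
  have hval (x : 𝔻) : e x = φ x := (congrFun hpe x).symm
  have hmem : φ t ∈ e.target := hval ⟨t, ht⟩ ▸ e.map_source he
  refine deriv_ne_zero_of_eventually_rightInverse (g := fun w => (e.symm w : ℂ))
    (hφ.analyticAt ht) ?_ ?_
  · have := e.left_inv he
    rw [hval] at this
    exact congrArg Subtype.val this
  · filter_upwards [e.open_target.mem_nhds hmem] with w hw
    refine ⟨continuous_subtype_val.continuousAt.comp (e.continuousAt_symm hw), ?_⟩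
    rw [← hval, e.right_inv hw]

lemma exists_lift (hU : IsOpen U) (hf : DifferentiableOn ℂ f 𝔻) (hmaps : MapsTo f 𝔻 U)
    (ht : t ∈ 𝔻) (hz : z ∈ 𝔻) (h : φ t = f z) :
    ∃ k : ℂ → ℂ, DifferentiableOn ℂ k 𝔻 ∧ MapsTo k 𝔻 𝔻 ∧ EqOn (φ ∘ k) f 𝔻 ∧ k z = t := by
  let F : C(𝔻, ℂ) := ⟨fun x => f x, hf.continuousOn.domRestrict⟩
  obtain ⟨H, ⟨hHz, hH⟩, -⟩ := (hφ.isCoveringMapOn hU).existsUnique_continuousMap_lifts F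
    (a₀ := ⟨z, hz⟩) (e₀ := ⟨t, ht⟩) h fun x => hmaps x.2
  let k : ℂ → ℂ := Function.extend Subtype.val (fun x : 𝔻 => (H x : ℂ)) 0
  have hk (x : 𝔻) : k x = H x := Subtype.val_injective.extend_apply _ _ x
  have hkmaps : MapsTo k 𝔻 𝔻 := fun x hx => by
    rw [show k x = H ⟨x, hx⟩ from hk ⟨x, hx⟩]
    exact (H ⟨x, hx⟩).2
  have hcomp : EqOn (φ ∘ k) f 𝔻 := fun x hx => by
    rw [Function.comp_apply, show k x = H ⟨x, hx⟩ from hk ⟨x, hx⟩]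
    exact congrFun hH ⟨x, hx⟩
  have hkc : ContinuousOn k 𝔻 := by
    rw [continuousOn_iff_continuous_domRestrict]
    exact (continuous_subtype_val.comp H.continuous).congr fun x => (hk x).symm
  refine ⟨k, fun x hx => ?_, hkmaps, hcomp, (hk ⟨z, hz⟩).trans (congrArg Subtype.val hHz)⟩
  have hx_nhds := isOpen_ball.mem_nhds hx
  exact (hasDerivAt_of_comp_eventuallyEq (hφ.analyticAt (hkmaps hx)).hasStrictDerivAt
    (hφ.deriv_ne_zero hU (hkmaps hx)) (differentiableAt_of_mem_disc hf hx).hasDerivAt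
    (hkc.continuousAt hx_nhds)
    (by filter_upwards [hx_nhds] using hcomp)).differentiableAt.differentiableWithinAt

lemma hypDeriv_le_of_mapsTo (hU : IsOpen U) (hsub : U ⊆ 𝔻) (hf : DifferentiableOn ℂ f 𝔻)
    (hmaps : MapsTo f 𝔻 U) (ht : t ∈ 𝔻) (hz : z ∈ 𝔻) (h : φ t = f z) :
    hypDeriv f z ≤ hypDeriv φ t := by
  obtain ⟨k, hk, hkmaps, hcomp, rfl⟩ := hφ.exists_lift hU hf hmaps ht hz h
  calc hypDeriv f z = hypDeriv (φ ∘ k) z :=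
        (hypDeriv_congr (hcomp.eventuallyEq_of_mem (isOpen_ball.mem_nhds hz))).symm
    _ = hypDeriv φ (k z) * hypDeriv k z :=
        hypDeriv_comp (hφ.differentiableAt ht) (differentiableAt_of_mem_disc hk hz) ht
    _ ≤ hypDeriv φ (k z) := mul_le_of_le_one_right
        (hypDeriv_nonneg ht (hsub (hφ.mapsTo ht))) (hypDeriv_le_one hk hkmaps hz)

lemma hypDeriv_eq (hU : IsOpen U) (hsub : U ⊆ 𝔻) {t₁ t₂ : ℂ} (ht₁ : t₁ ∈ 𝔻) (ht₂ : t₂ ∈ 𝔻)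
    (h : φ t₁ = φ t₂) : hypDeriv φ t₁ = hypDeriv φ t₂ :=
  (hφ.hypDeriv_le_of_mapsTo hU hsub hφ.1 hφ.mapsTo ht₂ ht₁ h.symm).antisymm
    (hφ.hypDeriv_le_of_mapsTo hU hsub hφ.1 hφ.mapsTo ht₁ ht₂ h)

end IsHoloCover

/-! ### Comparison of hyperbolic densities -/

/-- The ratio `λ_𝔻 / λ_U` at `w` of hyperbolic densities, for `φ` a covering map of `U ⊆ 𝔻` by the
disc; all points of the fibre over `w` then give the same value. It is `0` (as `sSup ∅`) where the
fibre is empty, in particular outside `U`, where `λ_U = ∞`. -/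
def densityRatio (φ : ℂ → ℂ) (w : ℂ) : ℝ := sSup (hypDeriv φ '' (𝔻 ∩ φ ⁻¹' {w}))

lemma densityRatio_of_notMem (hw : w ∉ φ '' 𝔻) : densityRatio φ w = 0 := by
  have hempty : 𝔻 ∩ φ ⁻¹' {w} = ∅ :=
    eq_empty_of_forall_notMem fun t ht => hw ⟨t, ht.1, ht.2⟩
  rw [densityRatio, hempty, image_empty, Real.sSup_empty]

namespace IsHoloCover

variable {U : Set ℂ} (hφ : IsHoloCover φ U) (hU : IsOpen U) (hsub : U ⊆ 𝔻)
include hφ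

include hU in
lemma continuousAt_densityRatio_of_notMem_image (hw : w ∈ U) (hwφ : w ∉ φ '' 𝔻) :
    ContinuousAt (densityRatio φ) w := by
  have hrange : range (fun x : 𝔻 => φ x) = φ '' 𝔻 := (image_eq_range φ 𝔻).symm
  have hev := eventually_notMem_range_of_isCoveringMapOn (hφ.isCoveringMapOn hU) hw
    (hrange.symm ▸ hwφ)
  rw [hrange] at hev
  exact continuousAt_const.congr (hev.mono fun x hx => (densityRatio_of_notMem hx).symm)

include hsub

lemma mapsTo_disc : MapsTo φ 𝔻 𝔻 := hφ.mapsTo.mono_right hsub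

lemma densityRatio_le (ha : a ∈ 𝔻 \ U) (hw : w ∈ 𝔻) :
    densityRatio φ w ≤ puncturedDiscRatio ‖blaschkeFactor a w‖ := by
  have hnorm := mem_ball_zero_iff.mp (blaschkeFactor_mem_ball ha.1 hw)
  refine Real.sSup_le ?_ (puncturedDiscRatio_nonneg (norm_nonneg _) hnorm)
  rintro _ ⟨t, ⟨ht, rfl⟩, rfl⟩
  exact hypDeriv_le_puncturedDiscRatio_of_forall_ne hφ.1 (hφ.mapsTo_disc hsub) ha.1
    (fun z hz h => ha.2 (h ▸ hφ.mapsTo hz)) ht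

lemma densityRatio_nonneg (w : ℂ) : 0 ≤ densityRatio φ w := by
  refine Real.sSup_nonneg ?_
  rintro _ ⟨t, ⟨ht, -⟩, rfl⟩
  exact hypDeriv_nonneg ht (hφ.mapsTo_disc hsub ht)

lemma continuousAt_densityRatio_of_notMem (hw : w ∈ 𝔻 \ U) :
    ContinuousAt (densityRatio φ) w := by
  have hbound : ContinuousOn (fun x => puncturedDiscRatio ‖blaschkeFactor w x‖) 𝔻 :=
    continuousOn_puncturedDiscRatio.comp
      (differentiableOn_blaschkeFactor hw.1).continuousOn.norm fun x hx =>
        ⟨norm_nonneg _, mem_ball_zero_iff.mp (blaschkeFactor_mem_ball hw.1 hx)⟩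
  have hnhds := isOpen_ball.mem_nhds hw.1
  have hzero : densityRatio φ w = 0 := densityRatio_of_notMem fun ⟨t, ht, h⟩ =>
    hw.2 (h ▸ hφ.mapsTo ht)
  have htendsto := (hbound.continuousAt hnhds).tendsto
  rw [blaschkeFactor_self, norm_zero, puncturedDiscRatio, Real.negMulLog_zero, mul_zero,
    zero_div] at htendsto
  rw [ContinuousAt, hzero]
  refine squeeze_zero' (.of_forall (hφ.densityRatio_nonneg hsub)) ?_ htendsto
  filter_upwards [hnhds] with x hx using hφ.densityRatio_le hsub hw hx

include hU

lemma densityRatio_apply (ht : t ∈ 𝔻) : densityRatio φ (φ t) = hypDeriv φ t := by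
  have hsingleton : hypDeriv φ '' (𝔻 ∩ φ ⁻¹' {φ t}) = {hypDeriv φ t} := by
    refine eq_singleton_iff_unique_mem.mpr ⟨⟨t, ⟨ht, rfl⟩, rfl⟩, ?_⟩
    rintro _ ⟨t', ⟨ht', h⟩, rfl⟩
    exact hφ.hypDeriv_eq hU hsub ht' ht h
  rw [densityRatio, hsingleton, csSup_singleton]

lemma exists_localSection (ht : t ∈ 𝔻) :
    ∃ g : ℂ → ℂ, AnalyticAt ℂ g (φ t) ∧ g (φ t) = t ∧
      ∀ᶠ w in 𝓝 (φ t), φ (g w) = w ∧ densityRatio φ w = hypDeriv φ (g w) := by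
  obtain ⟨g, hg, hgt, hφg⟩ := exists_analyticAt_rightInverse (hφ.analyticAt ht)
    (hφ.deriv_ne_zero hU ht)
  refine ⟨g, hg, hgt, ?_⟩
  filter_upwards [hφg, hg.continuousAt (isOpen_ball.mem_nhds (hgt.symm ▸ ht))] with w hw hgw
  exact ⟨hw, by rw [← hφ.densityRatio_apply hU hsub hgw, hw]⟩

lemma continuousAt_densityRatio_apply (ht : t ∈ 𝔻) : ContinuousAt (densityRatio φ) (φ t) := by
  obtain ⟨g, hg, hgt, hev⟩ := hφ.exists_localSection hU hsub ht
  have hcont : ContinuousAt (hypDeriv φ) (g (φ t)) :=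
    hgt.symm ▸ continuousAt_hypDeriv (hφ.analyticAt ht) (hφ.mapsTo_disc hsub ht)
  exact (hcont.comp hg.continuousAt).congr (hev.mono fun w hw => hw.2.symm)

theorem continuousOn_densityRatio : ContinuousOn (densityRatio φ) 𝔻 := by
  intro w hw
  refine ContinuousAt.continuousWithinAt ?_
  by_cases hwU : w ∈ U
  · by_cases hwφ : w ∈ φ '' 𝔻
    · obtain ⟨t, ht, rfl⟩ := hwφ
      exact hφ.continuousAt_densityRatio_apply hU hsub ht
    · exact hφ.continuousAt_densityRatio_of_notMem_image hU hwU hwφ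
  · exact hφ.continuousAt_densityRatio_of_notMem hsub ⟨hw, hwU⟩

variable {s : ℂ → ℂ}

theorem not_isLocalMax_hypDeriv_mul_densityRatio (hf : DifferentiableOn ℂ f 𝔻)
    (hmaps : MapsTo f 𝔻 𝔻) (hz : z ∈ 𝔻) (hs : AnalyticAt ℂ s z) (hsz : s z ∈ 𝔻)
    (hgt : 1 < hypDeriv s z * densityRatio φ (f z)) :
    ¬ IsLocalMax (fun x => hypDeriv s x * densityRatio φ (f x)) z := by
  obtain ⟨t, ht, hft⟩ : f z ∈ φ '' 𝔻 := by
    by_contra hnot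
    norm_num [densityRatio_of_notMem hnot] at hgt
  obtain ⟨g, hg, hgt', hev⟩ := hφ.exists_localSection hU hsub ht
  rw [hft] at hg hgt' hev
  have hfa : AnalyticAt ℂ f z := hf.analyticAt (isOpen_ball.mem_nhds hz)
  have hev := hfa.continuousAt.eventually hev
  have hcomp : φ ∘ g ∘ f =ᶠ[𝓝 z] f := hev.mono fun x hx => hx.1
  have hφ_disc := hφ.mapsTo_disc hsub
  subst hgt'
  rw [hev.self_of_nhds.2] at hgt
  have hnot := not_isLocalMax_hypDeriv_mul_hypDeriv_comp (g := g ∘ f) hs (hφ.analyticAt ht)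
    (hg.comp hfa) hz hsz ht (hφ_disc ht) (hypDeriv_le_one hφ.1 hφ_disc ht)
    ((hypDeriv_congr hcomp).trans_le (hypDeriv_le_one hf hmaps hz)) hgt
  refine fun hmax => hnot (hmax.congr ?_)
  filter_upwards [hev] with x hx
  rw [hx.2, Function.comp_apply]

theorem hypDeriv_mul_densityRatio_le_one (hf : DifferentiableOn ℂ f 𝔻) (hmaps : MapsTo f 𝔻 𝔻)
    {S : Set ℂ} (hS : IsCompact S) (hS_sub : S ⊆ 𝔻) (hs : ∀ x ∈ S, AnalyticAt ℂ s x)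
    (hs_maps : MapsTo s S 𝔻) (hbd : ∀ x ∈ frontier S, hypDeriv s x * densityRatio φ (f x) ≤ 1)
    (hz : z ∈ S) : hypDeriv s z * densityRatio φ (f z) ≤ 1 := by
  have hcont : ContinuousOn (fun x => hypDeriv s x * densityRatio φ (f x)) S :=
    (continuousOn_of_forall_continuousAt fun x hx =>
      continuousAt_hypDeriv (hs x hx) (hs_maps hx)).mul
      (((hφ.continuousOn_densityRatio hU hsub).comp hf.continuousOn hmaps).mono hS_sub)
  obtain ⟨m, hm, hmax⟩ := hS.exists_isMaxOn ⟨z, hz⟩ hcont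
  refine (hmax hz).trans ?_
  by_contra! hgt
  have hm_int : m ∈ interior S := by
    by_contra hnot
    exact hgt.not_ge (hbd m ⟨subset_closure hm, hnot⟩)
  exact hφ.not_isLocalMax_hypDeriv_mul_densityRatio hU hsub hf hmaps (hS_sub hm) (hs m hm)
    (hs_maps hm) hgt (hmax.isLocalMax (mem_interior_iff_mem_nhds.mp hm_int))

end IsHoloCover

lemma hypDeriv_div_ofReal {R : ℝ} (hR : 0 < R) (z : ℂ) :
    hypDeriv (fun x => x / (R : ℂ)) z = R * (1 - ‖z‖ ^ 2) / (R ^ 2 - ‖z‖ ^ 2) := by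
  have hderiv : HasDerivAt (fun x : ℂ => x / (R : ℂ)) (1 / R) z := (hasDerivAt_id z).div_const _
  rw [hypDeriv, hderiv.deriv, norm_div, norm_div, norm_one, Complex.norm_real,
    Real.norm_of_nonneg hR.le]
  field_simp

theorem IsHoloCover.hypDeriv_le_of_densityRatio_le {U : Set ℂ} (hφ : IsHoloCover φ U)
    (hU : IsOpen U) (hsub : U ⊆ 𝔻) (hf : DifferentiableOn ℂ f 𝔻) (hmaps : MapsTo f 𝔻 𝔻)
    {r R δ : ℝ} (hr : 0 < r) (hrR : r < R) (hR : R < 1)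
    (hδ : ∀ z, ‖z‖ = r → densityRatio φ (f z) ≤ δ) (hle : R * (1 - r ^ 2) * δ ≤ R ^ 2 - r ^ 2)
    (ht : t ∈ 𝔻) (hφt : φ t = f 0) : hypDeriv φ t ≤ R := by
  have hR₀ : 0 < R := hr.trans hrR
  have hscale_maps : MapsTo (fun x : ℂ => x / (R : ℂ)) (closedBall 0 r) 𝔻 := fun x hx => by
    rw [mem_closedBall_zero_iff] at hx
    rw [mem_ball_zero_iff, norm_div, Complex.norm_real, Real.norm_of_nonneg hR₀.le, div_lt_one hR₀]
    exact hx.trans_lt hrR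
  have hboundary (x : ℂ) (hx : x ∈ frontier (closedBall (0 : ℂ) r)) :
      hypDeriv (fun x => x / (R : ℂ)) x * densityRatio φ (f x) ≤ 1 := by
    rw [frontier_closedBall 0 hr.ne', mem_sphere_zero_iff_norm] at hx
    have hgap : 0 < R ^ 2 - r ^ 2 := sub_pos.mpr (pow_lt_pow_left₀ hrR hr.le two_ne_zero)
    have hfactor : 0 ≤ R * (1 - r ^ 2) := mul_nonneg hR₀.le (by nlinarith)
    rw [hypDeriv_div_ofReal hR₀, hx, div_mul_eq_mul_div, div_le_one hgap]
    exact (mul_le_mul_of_nonneg_left (hδ x hx) hfactor).trans hle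
  have hcenter := hφ.hypDeriv_mul_densityRatio_le_one hU hsub
    (s := fun x => x / (R : ℂ)) hf hmaps (isCompact_closedBall 0 r)
    (closedBall_subset_ball (hrR.trans hR)) (fun x _ => analyticAt_id.div_const) hscale_maps
    hboundary (mem_closedBall_self hr.le)
  rw [← hφt, hφ.densityRatio_apply hU hsub ht, hypDeriv_div_ofReal hR₀] at hcenter
  have hscale₀ : R * (1 - ‖(0 : ℂ)‖ ^ 2) / (R ^ 2 - ‖(0 : ℂ)‖ ^ 2) = R⁻¹ := by
    rw [norm_zero]
    field_simp
    simp
  rwa [hscale₀, inv_mul_le_iff₀ hR₀, mul_one] at hcenter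

/-! ### Choice of the comparison radius -/

section ComparisonRadius

variable {r R δ ρ : ℝ}

lemma mul_one_sub_sq_mul_le (hδ₀ : 0 ≤ δ) (hδ₁ : δ ≤ 1) (hr₀ : 0 ≤ r) (hr₁ : r ≤ 1) (hR : R ≤ 1)
    (hle : 1 - R ^ 2 ≤ (1 - δ) * (1 - r)) : R * (1 - r ^ 2) * δ ≤ R ^ 2 - r ^ 2 := by
  have hmul : R * ((1 - r ^ 2) * δ) ≤ (1 - r ^ 2) * δ :=
    mul_le_of_le_one_left (mul_nonneg (by nlinarith) hδ₀) hR
  have hprod : 0 ≤ (1 - δ) * ((1 - r) * r) :=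
    mul_nonneg (sub_nonneg.mpr hδ₁) (mul_nonneg (sub_nonneg.mpr hr₁) hr₀)
  linarith

lemma one_sub_exp_mul_log_sq_le (hδ : δ ≤ 1) (hρ : 0 ≤ ρ) (hρr : ρ ≤ r) (hr₀ : 0 < r)
    (hr₁ : r ≤ 1) :
    1 - Real.exp ((1 - δ) * ρ / 2 * Real.log r) ^ 2 ≤ (1 - δ) * (1 - r) := by
  have hlog : -((1 - r) / r) ≤ Real.log r := by
    refine le_of_eq_of_le ?_ (Real.one_sub_inv_le_log_of_pos hr₀)
    field_simp
    ring
  have hρlog : -(1 - r) ≤ ρ * Real.log r := by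
    calc -(1 - r) = r * -((1 - r) / r) := by field_simp
      _ ≤ ρ * -((1 - r) / r) := mul_le_mul_of_nonpos_right hρr
          (neg_nonpos.mpr (div_nonneg (sub_nonneg.mpr hr₁) hr₀.le))
      _ ≤ ρ * Real.log r := mul_le_mul_of_nonneg_left hlog hρ
  have hexp := Real.add_one_le_exp ((1 - δ) * (ρ * Real.log r))
  have hmul := mul_le_mul_of_nonneg_left hρlog (sub_nonneg.mpr hδ)
  rw [← Real.exp_nat_mul, show ((2 : ℕ) : ℝ) * ((1 - δ) * ρ / 2 * Real.log r) =
    (1 - δ) * (ρ * Real.log r) by push_cast; ring]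
  linarith

lemma lt_exp_mul_log {c : ℝ} (hc : c < 1) (hr₀ : 0 < r) (hr₁ : r < 1) :
    r < Real.exp (c * Real.log r) := by
  rw [← Real.log_lt_iff_lt_exp hr₀]
  nlinarith [Real.log_neg hr₀ hr₁]

end ComparisonRadius

/-! ### Hyperbolic distance and roots of unity -/

lemma norm_blaschkeFactor_mem_Ioo (hz : z ∈ 𝔻) (hw : w ∈ 𝔻) :
    ‖blaschkeFactor z w‖ ∈ Ioo (-1) 1 :=
  ⟨by linarith [norm_nonneg (blaschkeFactor z w)],
    mem_ball_zero_iff.mp (blaschkeFactor_mem_ball hz hw)⟩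

lemma hypDist_eq_two_mul_artanh (hz : z ∈ 𝔻) (hw : w ∈ 𝔻) :
    hypDist z w = 2 * Real.artanh ‖blaschkeFactor z w‖ := by
  rw [Real.artanh_eq_half_log (Ioo_subset_Icc_self (norm_blaschkeFactor_mem_Ioo hz hw)), hypDist,
    artanh, blaschkeFactor, norm_div, norm_sub_rev]

lemma hypDist_le_iff (hz : z ∈ 𝔻) (hw : w ∈ 𝔻) {d : ℝ} :
    hypDist z w ≤ d ↔ ‖blaschkeFactor z w‖ ≤ Real.tanh (d / 2) := by
  rw [← Real.artanh_le_artanh_iff (norm_blaschkeFactor_mem_Ioo hz hw)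
    ⟨Real.neg_one_lt_tanh _, Real.tanh_lt_one _⟩, Real.artanh_tanh, hypDist_eq_two_mul_artanh hz hw,
    le_div_iff₀' two_pos]

lemma hypDist_le_hypDist_of_norm_sub_le {z' w' : ℂ} (hz : z ∈ 𝔻) (hw : w ∈ 𝔻)
    (hnz : ‖z'‖ = ‖z‖) (hnw : ‖w'‖ = ‖w‖) (h : ‖z' - w'‖ ≤ ‖z - w‖) :
    hypDist z' w' ≤ hypDist z w := by
  have hz' : z' ∈ 𝔻 := by simpa [hnz] using hz
  have hw' : w' ∈ 𝔻 := by simpa [hnw] using hw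
  have hz_pos := one_sub_norm_sq_pos hz
  have hw_pos := one_sub_norm_sq_pos hw
  have hden : ‖1 - conj z' * w'‖ ^ 2 ≤ ‖1 - conj z * w‖ ^ 2 := by
    rw [norm_one_sub_conj_mul_sq, norm_one_sub_conj_mul_sq, hnz, hnw, norm_sub_rev w',
      norm_sub_rev w]
    gcongr
  have hsq : 1 - ‖blaschkeFactor z w‖ ^ 2 ≤ 1 - ‖blaschkeFactor z' w'‖ ^ 2 := by
    rw [one_sub_norm_blaschkeFactor_sq hz hw, one_sub_norm_blaschkeFactor_sq hz' hw', hnz, hnw]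
    have := norm_pos_iff.mpr (one_sub_conj_mul_ne_zero hz' hw')
    gcongr
  have hnorm : ‖blaschkeFactor z' w'‖ ≤ ‖blaschkeFactor z w‖ :=
    le_of_sq_le_sq (by linarith) (norm_nonneg _)
  rw [hypDist_eq_two_mul_artanh hz hw, hypDist_eq_two_mul_artanh hz' hw']
  gcongr
  exact (Real.artanh_le_artanh_iff (norm_blaschkeFactor_mem_Ioo hz' hw')
    (norm_blaschkeFactor_mem_Ioo hz hw)).mpr hnorm

lemma norm_exp_I_mul_sub_one_le {α β : ℝ} (hβ : 0 ≤ β) (hβα : β ≤ α) (hα : α ≤ Real.pi) :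
    ‖Complex.exp (I * β) - 1‖ ≤ ‖Complex.exp (I * α) - 1‖ := by
  have hsin : Real.sin (β / 2) ≤ Real.sin (α / 2) :=
    Real.sin_le_sin_of_le_of_le_pi_div_two (by linarith [Real.pi_pos]) (by linarith) (by linarith)
  have hsin₀ : 0 ≤ Real.sin (β / 2) :=
    Real.sin_nonneg_of_nonneg_of_le_pi (by linarith) (by linarith [Real.pi_pos])
  rw [Complex.norm_exp_I_mul_ofReal_sub_one, Complex.norm_exp_I_mul_ofReal_sub_one,
    Real.norm_of_nonneg (by linarith), Real.norm_of_nonneg (by linarith)]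
  linarith

lemma exists_pow_eq_one_norm_sub_le {q : ℕ} (hq : 2 ≤ q) (hz : ‖z‖ = 1) :
    ∃ ζ : ℂ, ζ ^ q = 1 ∧ ‖ζ - z‖ ≤ ‖1 - Complex.exp (2 * Real.pi * I / q)‖ := by
  have hq₀ : (0 : ℝ) < q := by positivity
  set α : ℝ := 2 * Real.pi / q with hα
  have hα₀ : 0 < α := by positivity
  have hα_pi : α ≤ Real.pi := by
    rw [hα, div_le_iff₀ hq₀, mul_comm]
    exact mul_le_mul_of_nonneg_left (by exact_mod_cast hq) Real.pi_pos.le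
  have hω : Complex.exp (2 * Real.pi * I / q) = Complex.exp (I * α) := by
    rw [hα]
    push_cast
    ring_nf
  set k := toIcoDiv hα₀ 0 z.arg
  set β := toIcoMod hα₀ 0 z.arg
  have hβ : 0 ≤ β ∧ β < α := by simpa using toIcoMod_mem_Ico hα₀ 0 z.arg
  have harg : z.arg = k * α + β := by
    rw [← zsmul_eq_mul, toIcoDiv_zsmul_sub_toIcoMod]
  refine ⟨Complex.exp (I * α) ^ k, ?_, ?_⟩
  · have hroot : Complex.exp (I * α) ^ q = 1 := by
      rw [← hω, ← Complex.exp_nat_mul, mul_div_cancel₀ _ (by exact_mod_cast hq₀.ne'),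
        Complex.exp_two_pi_mul_I]
    rw [← zpow_natCast, zpow_comm, zpow_natCast, hroot, one_zpow]
  · have hzk : z = Complex.exp (I * α) ^ k * Complex.exp (I * β) := by
      rw [← Complex.exp_int_mul, ← Complex.exp_add, ← Complex.norm_mul_exp_arg_mul_I z, hz, harg]
      push_cast
      ring_nf
    have hnorm : ‖Complex.exp (I * α) ^ k‖ = 1 := by
      rw [norm_zpow, Complex.norm_exp_I_mul_ofReal, one_zpow]
    rw [hω, norm_sub_rev 1]
    calc ‖Complex.exp (I * α) ^ k - z‖ = ‖Complex.exp (I * β) - 1‖ := by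
          conv_lhs => rw [hzk, ← mul_one_sub, norm_mul, hnorm, one_mul, norm_sub_rev]
      _ ≤ ‖Complex.exp (I * α) - 1‖ := norm_exp_I_mul_sub_one_le hβ.1 hβ.2.le hα_pi

lemma norm_eq_of_mem_rootsSet {r : ℝ} (hr : 0 ≤ r) {q : ℕ} (hq : q ≠ 0) (hw : w ∈ rootsSet r q) :
    ‖w‖ = r := by
  obtain ⟨ζ, hζ, rfl⟩ := hw
  rw [norm_mul, Complex.norm_eq_one_of_pow_eq_one hζ hq, mul_one, Complex.norm_real,
    Real.norm_of_nonneg hr]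

lemma exists_mem_rootsSet_hypDist_le {r : ℝ} (hr₀ : 0 < r) (hr₁ : r < 1) {q : ℕ} (hq : 2 ≤ q)
    (hz : ‖z‖ = r) :
    ∃ w ∈ rootsSet r q, hypDist w z ≤ hypDist r (r * Complex.exp (2 * Real.pi * I / q)) := by
  have hr : ‖(r : ℂ)‖ = r := by rw [Complex.norm_real, Real.norm_of_nonneg hr₀.le]
  have hr_ne : (r : ℂ) ≠ 0 := Complex.ofReal_ne_zero.mpr hr₀.ne'
  obtain ⟨ζ, hζ, hle⟩ := exists_pow_eq_one_norm_sub_le hq (z := z / r)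
    (by rw [norm_div, hz, hr, div_self hr₀.ne'])
  have hmem : (r : ℂ) * ζ ∈ rootsSet r q := ⟨ζ, hζ, rfl⟩
  have hnorm := norm_eq_of_mem_rootsSet hr₀.le (by positivity) hmem
  have hω : ‖(r : ℂ) * Complex.exp (2 * Real.pi * I / q)‖ = r :=
    norm_eq_of_mem_rootsSet hr₀.le (by positivity) ⟨_, by
      rw [← Complex.exp_nat_mul, mul_div_cancel₀ _ (by norm_cast; positivity),
        Complex.exp_two_pi_mul_I], rfl⟩
  refine ⟨r * ζ, hmem, hypDist_le_hypDist_of_norm_sub_le (by rwa [mem_ball_zero_iff, hr])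
    (by rwa [mem_ball_zero_iff, hω]) (hnorm.trans hr.symm) (hz.trans hω.symm) ?_⟩
  calc ‖(r : ℂ) * ζ - z‖ = r * ‖ζ - z / r‖ := by
        rw [← hr, ← norm_mul, mul_sub, hr, mul_div_cancel₀ _ hr_ne]
    _ ≤ r * ‖1 - Complex.exp (2 * Real.pi * I / q)‖ := mul_le_mul_of_nonneg_left hle hr₀.le
    _ = ‖(r : ℂ) - r * Complex.exp (2 * Real.pi * I / q)‖ := by
        rw [← mul_one_sub, norm_mul, hr]

lemma finite_rootsSet (r : ℝ) {q : ℕ} (hq : 0 < q) : (rootsSet r q).Finite := by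
  refine (Set.Finite.image (fun ζ : ℂ => (r : ℂ) * ζ)
    (Polynomial.nthRootsFinset q (1 : ℂ)).finite_toSet).subset ?_
  rintro _ ⟨ζ, hζ, rfl⟩
  exact ⟨ζ, (Polynomial.mem_nthRootsFinset hq 1).mpr hζ, rfl⟩

/-! ### Conformal radius -/

theorem stmt13_general (d : ℝ) {ρ : ℝ} (hρ₀ : 0 < ρ) (hρ₁ : ρ ≤ 1) :
    ∃ K > (1 : ℝ), ∀ f : ℂ → ℂ, DifferentiableOn ℂ f 𝔻 → MapsTo f 𝔻 𝔻 → f 0 = 0 →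
      ∀ r : ℝ, ρ < r → r < 1 →
      ∀ E : Set ℂ, IsOpen (𝔻 \ E) → (∀ z, ‖z‖ = r → ∃ w ∈ 𝔻, f w ∈ E ∧ hypDist w z ≤ d) →
      ∀ φ : ℂ → ℂ, IsHoloCover φ (𝔻 \ E) → φ 0 = 0 →
        Real.log ‖deriv φ 0‖ ≤ Real.log r / K ∧ Real.log r / K < 0 := by
  obtain ⟨δ, hδ₀, hδ₁, hδ⟩ := exists_puncturedDiscRatio_le (abs_nonneg (Real.tanh (d / 2)))
    (abs_lt.mpr ⟨Real.neg_one_lt_tanh _, Real.tanh_lt_one _⟩)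
  set c := (1 - δ) * ρ / 2 with hc
  have hc₀ : 0 < c := by have := sub_pos.mpr hδ₁; positivity
  have hc₁ : c < 1 := by nlinarith
  refine ⟨c⁻¹, (one_lt_inv₀ hc₀).mpr hc₁, fun f hf hmaps hf₀ r hr hr₁ E hE hnear φ hφ hφ₀ => ?_⟩
  have hr₀ : 0 < r := hρ₀.trans hr
  rw [div_inv_eq_mul, mul_comm]
  have hneg : c * Real.log r < 0 := mul_neg_of_pos_of_neg hc₀ (Real.log_neg hr₀ hr₁)
  refine ⟨?_, hneg⟩
  have hcircle (z : ℂ) (hz : ‖z‖ = r) : densityRatio φ (f z) ≤ δ := by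
    have hz_mem : z ∈ 𝔻 := by rwa [mem_ball_zero_iff, hz]
    obtain ⟨w, hw, hfw, hwz⟩ := hnear z hz
    exact (hφ.densityRatio_le sdiff_subset ⟨hmaps hw, fun h => h.2 hfw⟩ (hmaps hz_mem)).trans
      (hδ _ ⟨norm_nonneg _, (norm_blaschkeFactor_map_le hf hmaps hw hz_mem).trans
        (((hypDist_le_iff hw hz_mem).mp hwz).trans (le_abs_self _))⟩)
  have hR₁ : Real.exp (c * Real.log r) < 1 := Real.exp_lt_one_iff.mpr hneg
  have hderiv := hφ.hypDeriv_le_of_densityRatio_le hE sdiff_subset hf hmaps hr₀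
    (lt_exp_mul_log hc₁ hr₀ hr₁) hR₁ hcircle
    (mul_one_sub_sq_mul_le hδ₀ hδ₁.le hr₀.le hr₁.le hR₁.le
      (one_sub_exp_mul_log_sq_le hδ₁.le hρ₀.le hr.le hr₀ hr₁.le)) zero_mem_disc (hφ₀.trans hf₀.symm)
  have hφ' := norm_pos_iff.mpr (hφ.deriv_ne_zero hE zero_mem_disc)
  rw [Real.log_le_iff_le_exp hφ']
  simpa [hypDeriv, hφ₀] using hderiv

/-- For every `d > 0` there is `K(d) > 1` such that: for every nonconstant
holomorphic `f : 𝔻 → 𝔻` with `f 0 = 0`, every `r ∈ (e⁻¹, 1)` and integer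
`q ≥ 2` with the hyperbolic distance between `r` and `r·e^{2πi/q}` at most `d`,
and `0 ∉ f(r·𝕌_q)`, every holomorphic covering map `φ : 𝔻 → 𝔻 \ f(r·𝕌_q)`
with `φ 0 = 0` satisfies `ln|φ'(0)| ≤ ln r / K(d) < 0`. -/
theorem stmt13 : ∀ d > (0 : ℝ), ∃ K > (1 : ℝ),
    ∀ f : ℂ → ℂ, DifferentiableOn ℂ f (Metric.ball 0 1) →
      Set.MapsTo f (Metric.ball 0 1) (Metric.ball 0 1) → f 0 = 0 →
      (∃ z ∈ Metric.ball (0 : ℂ) 1, f z ≠ f 0) →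
      ∀ r : ℝ, Real.exp (-1) < r → r < 1 →
      ∀ q : ℕ, 2 ≤ q →
      hypDist (r : ℂ) ((r : ℂ) * Complex.exp (2 * Real.pi * Complex.I / q)) ≤ d →
      (0 : ℂ) ∉ f '' rootsSet r q →
      ∀ φ : ℂ → ℂ, IsHoloCover φ (Metric.ball 0 1 \ f '' rootsSet r q) →
        φ 0 = 0 →
        Real.log ‖deriv φ 0‖ ≤ Real.log r / K ∧
        Real.log r / K < 0 := by
  intro d _
  obtain ⟨K, hK, hbound⟩ := stmt13_general d (Real.exp_pos (-1)) (by simp)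
  refine ⟨K, hK, fun f hf hmaps hf₀ _ r hr hr₁ q hq hdist _ φ hφ hφ₀ => ?_⟩
  have hr₀ : 0 < r := (Real.exp_pos _).trans hr
  have hopen : IsOpen (𝔻 \ f '' rootsSet r q) :=
    isOpen_ball.sdiff ((finite_rootsSet r (by positivity)).image f).isClosed
  refine hbound f hf hmaps hf₀ r hr hr₁ _ hopen (fun z hz => ?_) φ hφ hφ₀
  obtain ⟨w, hw, hwz⟩ := exists_mem_rootsSet_hypDist_le hr₀ hr₁ hq hz
  refine ⟨w, ?_, mem_image_of_mem f hw, hwz.trans hdist⟩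
  rwa [mem_ball_zero_iff, norm_eq_of_mem_rootsSet hr₀.le (by positivity) hw]
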